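/- Consider CULO with route exploration and cumulative link valuations (Algorithm 2): link valuations update by v^{t+1} = v^t + u(x^t) starting from v^0 = 0; all active routes in K_+^t are valued by s_+^t = (Λ_+^t)ᵀ v^t; the strategy p_+^t is the logit choice with parameter r over K_+^t; and for each OD pair a minimum-cost route under u(x^t) is added to K_+^{t+1} if absent. Suppose the algorithm converges to a fixed active route set K̄_+ and a fixed strategy p̄_+. If K̄_+ ⊇ ∪_{p* ∈ P*} supp(p*), then the extension p̄ = [p̄_+; 0] belongs to P* and is the MEUE strategy, i.e., the unique minimizer of the negative entropy φ over P*. -/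

import Mathlib

/-!
*Equilibrium.* The valuation of a route grows each day by its current cost, so if an active route is
strictly costlier in the limit than another active route of its OD pair, the gap of their
valuations diverges and its logit probability vanishes. Since a cheapest route of every OD pair is
active, `pbar` charges cheapest routes only, which is Wardrop's form of the variational inequality.

*Link flows.* Being cheapest within an OD pair is not affected by scaling the costs of that pair by
its demand. Hence equilibria also satisfy the variational inequality for link flows, and strict
monotonicity of `u` gives all of them the same link flow.

*Entropy.* On active routes the logarithm of a logit strategy is a combination of rows of `Λ` and
`Σ`, so for an equilibrium `p'` supported on active routes `D(p', pᵗ) - φ(p')` depends on `p'` only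
through the common link flow. Therefore `φ(p') - φ(pbar) = D(p', pᵗ) - D(pbar, pᵗ)`. Here
`D(pbar, pᵗ) → 0`, while `D(p', pᵗ)` dominates the squared Hellinger distance of `p'` and `pᵗ`,
which is continuous also where `log` is not; in the limit `φ(p') - φ(pbar)` is at least the squared
Hellinger distance of `p'` and `pbar`.
-/

open Matrix Filter Finset Topology

noncomputable section

variable {A W K : Type*}

/-- OD-route incidence matrix `Σ`: each column is the standard unit vector at `od k`
(every route `k` serves exactly one OD pair, `od k`). -/
def Sig [DecidableEq W] (od : K → W) : Matrix W K ℝ :=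
  Matrix.of fun w k => if od k = w then 1 else 0

/-- The strategy set `P = {p : p ≥ 0, Σ p = 1}`. -/
def Pset [Fintype K] [DecidableEq W] (od : K → W) : Set (K → ℝ) :=
  {p | (∀ k, 0 ≤ p k) ∧ ∀ w : W, (Sig od).mulVec p w = 1}

/-- `q = Σᵀ d`. -/
def qvec [Fintype W] [DecidableEq W] (od : K → W) (d : W → ℝ) : K → ℝ :=
  (Sig od)ᵀ.mulVec d

/-- `bΛ = Λ · diag q`. -/
def bLam [Fintype K] [Fintype W] [DecidableEq W] [DecidableEq K]
    (Λ : Matrix A K ℝ) (od : K → W) (d : W → ℝ) : Matrix A K ℝ :=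
  Λ * Matrix.diagonal (qvec od d)

/-- The link-flow set `X = {bΛ p : p ∈ P}`. -/
def Xset [Fintype K] [Fintype W] [DecidableEq W] [DecidableEq K]
    (Λ : Matrix A K ℝ) (od : K → W) (d : W → ℝ) : Set (A → ℝ) :=
  (fun p => (bLam Λ od d).mulVec p) '' Pset od

/-- The route-cost map `c(p) = Λᵀ u(bΛ p)`. -/
def routeCost [Fintype A] [Fintype K] [Fintype W] [DecidableEq W] [DecidableEq K]
    (Λ : Matrix A K ℝ) (od : K → W) (d : W → ℝ)
    (u : (A → ℝ) → (A → ℝ)) : (K → ℝ) → (K → ℝ) :=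
  fun p => Λᵀ.mulVec (u ((bLam Λ od d).mulVec p))

/-- The UE set `P*`: solutions of the variational inequality. -/
def UEset [Fintype A] [Fintype K] [Fintype W] [DecidableEq W] [DecidableEq K]
    (Λ : Matrix A K ℝ) (od : K → W) (d : W → ℝ)
    (u : (A → ℝ) → (A → ℝ)) : Set (K → ℝ) :=
  {p | p ∈ Pset od ∧ ∀ p' ∈ Pset od, 0 ≤ routeCost Λ od d u p ⬝ᵥ (p' - p)}

/-- The logit map `q_r`. -/
def logit [Fintype K] [DecidableEq W] (od : K → W) (r : ℝ) (s : K → ℝ) : K → ℝ :=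
  fun k => Real.exp (-r * s k) /
    ∑ k' ∈ Finset.univ.filter (fun k' => od k' = od k), Real.exp (-r * s k')

/-- The negative entropy `φ(p) = ∑ₖ qₖ pₖ log pₖ` (with `0·log 0 = 0`). -/
def negEnt [Fintype K] [Fintype W] [DecidableEq W] (od : K → W) (d : W → ℝ)
    (p : K → ℝ) : ℝ :=
  ∑ k, qvec od d k * (p k * Real.log (p k))

/-- The KL divergence `D(p, p') = ∑ₖ qₖ pₖ (log pₖ − log p'ₖ)` (with `0·log 0 = 0`). -/
def KLdiv [Fintype K] [Fintype W] [DecidableEq W] (od : K → W) (d : W → ℝ)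
    (p p' : K → ℝ) : ℝ :=
  ∑ k, qvec od d k * (p k * (Real.log (p k) - Real.log (p' k)))

/-! ### Strategies -/

section Strategies

variable [DecidableEq W] {od : K → W}

lemma qvec_apply [Fintype W] (od : K → W) (d : W → ℝ) (k : K) : qvec od d k = d (od k) := by
  simp [qvec, Sig, Matrix.mulVec, dotProduct]

variable [Fintype K]

lemma Sig_mulVec_apply (od : K → W) (p : K → ℝ) (w : W) :
    (Sig od *ᵥ p) w = ∑ k with od k = w, p k := by
  simp [Sig, Matrix.mulVec, dotProduct, Finset.sum_filter]

lemma qvec_dotProduct_of_mem_Pset [Fintype W] {p : K → ℝ} (hp : p ∈ Pset od) (g : W → ℝ) :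
    qvec od g ⬝ᵥ p = ∑ w, g w := by
  have hsum : Sig od *ᵥ p = 1 := funext hp.2
  rw [qvec, Matrix.mulVec_transpose, ← Matrix.dotProduct_mulVec, hsum, dotProduct_one]

lemma exists_pos_of_mem_Pset {p : K → ℝ} (hp : p ∈ Pset od) (w : W) :
    ∃ k, od k = w ∧ 0 < p k := by
  have hsum : ∑ k with od k = w, p k ≠ 0 := by
    rw [← Sig_mulVec_apply, hp.2 w]
    exact one_ne_zero
  obtain ⟨k, hk, hne⟩ := Finset.exists_ne_zero_of_sum_ne_zero hsum
  exact ⟨k, (Finset.mem_filter.1 hk).2, (hp.1 k).lt_of_ne' hne⟩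

lemma isClosed_Pset (od : K → W) : IsClosed (Pset od) := by
  simp only [Pset, Set.ofPred_and, Set.ofPred_forall]
  exact (isClosed_iInter fun k => isClosed_le continuous_const (continuous_apply k)).inter
    (isClosed_iInter fun w => isClosed_eq (by fun_prop) continuous_const)

lemma add_smul_single_sub_single_mem_Pset [DecidableEq K] {p : K → ℝ} (hp : p ∈ Pset od) {k k' : K}
    (hod : od k' = od k) : p + p k • (Pi.single k' 1 - Pi.single k 1) ∈ Pset od := by
  have hcol : (Sig od).col k' = (Sig od).col k := by
    ext w
    simp [Sig, hod]
  refine ⟨fun j => ?_, fun w => ?_⟩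
  · have hsingle : 0 ≤ (Pi.single k' 1 : K → ℝ) j := by
      rw [Pi.single_apply]
      positivity
    rcases eq_or_ne j k with rfl | hjk
    · simpa [mul_sub] using mul_nonneg (hp.1 j) hsingle
    · simpa [hjk] using add_nonneg (hp.1 j) (mul_nonneg (hp.1 k) hsingle)
  · rw [Matrix.mulVec_add, Matrix.mulVec_smul, Matrix.mulVec_sub, Matrix.mulVec_single_one,
      Matrix.mulVec_single_one, hcol, sub_self, smul_zero, add_zero, hp.2 w]

end Strategies

/-! ### Wardrop's principle -/

/-- Route `k` is a minimum-cost route of its OD pair under the route costs `c`. -/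
def IsCheapest (od : K → W) (c : K → ℝ) (k : K) : Prop :=
  ∀ k', od k' = od k → c k ≤ c k'

section Wardrop

variable {od : K → W}

lemma IsCheapest.cost_eq {c : K → ℝ} {k k' : K} (hk : IsCheapest od c k)
    (hk' : IsCheapest od c k') (hod : od k' = od k) : c k = c k' :=
  (hk k' hod).antisymm (hk' k hod.symm)

lemma IsCheapest.qvec_mul [Fintype W] [DecidableEq W] {c : K → ℝ} {k : K}
    (hk : IsCheapest od c k) {d : W → ℝ} (hd : 0 ≤ d) : IsCheapest od (qvec od d * c) k := by
  intro k' hod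
  simp only [Pi.mul_apply, qvec_apply, hod]
  exact mul_le_mul_of_nonneg_left (hk k' hod) (hd _)

lemma isClosed_setOf_exists_isCheapest (od : K → W) (S : Finset K) (w : W) :
    IsClosed {c : K → ℝ | ∃ k ∈ S, od k = w ∧ IsCheapest od c k} := by
  have hunion : {c : K → ℝ | ∃ k ∈ S, od k = w ∧ IsCheapest od c k} =
      ⋃ k ∈ S, {c | od k = w ∧ IsCheapest od c k} := by
    ext c
    simp only [Set.mem_iUnion, Set.mem_ofPred_eq, exists_prop]
  rw [hunion]
  refine S.finite_toSet.isClosed_biUnion fun k _ => isClosed_const.and ?_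
  simp only [IsCheapest, Set.ofPred_forall]
  exact isClosed_iInter fun k' => isClosed_iInter fun _ =>
    isClosed_le (continuous_apply k) (continuous_apply k')

variable [Fintype K] [DecidableEq W]

lemma dotProduct_sub_nonneg_of_isCheapest {p p' c : K → ℝ} (hp : p ∈ Pset od)
    (hc : ∀ k, p k ≠ 0 → IsCheapest od c k) (hp' : p' ∈ Pset od) : 0 ≤ c ⬝ᵥ (p' - p) := by
  choose κ hκ hκpos using exists_pos_of_mem_Pset hp
  let _ : Fintype W := Fintype.ofSurjective od fun w => ⟨κ w, hκ w⟩
  have hmin : ∀ w, IsCheapest od c (κ w) := fun w => hc _ (hκpos w).ne'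
  have hused : c ⬝ᵥ p = qvec od (c ∘ κ) ⬝ᵥ p := by
    refine Finset.sum_congr rfl fun k _ => ?_
    by_cases hk : p k = 0
    · simp [hk]
    · rw [qvec_apply, Function.comp_apply, (hc k hk).cost_eq (hmin (od k)) (hκ _)]
  have hle : qvec od (c ∘ κ) ⬝ᵥ p' ≤ c ⬝ᵥ p' := by
    refine Finset.sum_le_sum fun k _ => mul_le_mul_of_nonneg_right ?_ (hp'.1 k)
    rw [qvec_apply]
    exact hmin (od k) k (hκ _).symm
  rw [qvec_dotProduct_of_mem_Pset hp] at hused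
  rw [qvec_dotProduct_of_mem_Pset hp'] at hle
  rw [dotProduct_sub, hused]
  exact sub_nonneg.2 hle

lemma isCheapest_of_dotProduct_sub_nonneg {p c : K → ℝ} (hp : p ∈ Pset od)
    (hvi : ∀ p' ∈ Pset od, 0 ≤ c ⬝ᵥ (p' - p)) {k : K} (hk : p k ≠ 0) : IsCheapest od c k := by
  classical
  intro k' hod
  have hshift := hvi _ (add_smul_single_sub_single_mem_Pset hp hod)
  rw [add_sub_cancel_left, dotProduct_smul, dotProduct_sub, dotProduct_single_one,
    dotProduct_single_one, smul_eq_mul] at hshift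
  exact sub_nonneg.1 (nonneg_of_mul_nonneg_right hshift ((hp.1 k).lt_of_ne' hk))

end Wardrop

/-! ### User equilibria and their link flows -/

section Equilibrium

variable [Fintype A] [Fintype W] [Fintype K] [DecidableEq W] [DecidableEq K]
  {Λ : Matrix A K ℝ} {od : K → W} {d : W → ℝ} {u : (A → ℝ) → (A → ℝ)}

theorem mem_UEset_iff_isCheapest {p : K → ℝ} :
    p ∈ UEset Λ od d u ↔
      p ∈ Pset od ∧ ∀ k, p k ≠ 0 → IsCheapest od (routeCost Λ od d u p) k :=
  ⟨fun h => ⟨h.1, fun _ hk => isCheapest_of_dotProduct_sub_nonneg h.1 h.2 hk⟩,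
    fun h => ⟨h.1, fun _ hp' => dotProduct_sub_nonneg_of_isCheapest h.1 h.2 hp'⟩⟩

lemma dotProduct_bLam_mulVec (Λ : Matrix A K ℝ) (od : K → W) (d : W → ℝ) (v : A → ℝ)
    (z : K → ℝ) : v ⬝ᵥ bLam Λ od d *ᵥ z = (qvec od d * Λᵀ *ᵥ v) ⬝ᵥ z := by
  rw [bLam, ← Matrix.mulVec_mulVec, Matrix.dotProduct_mulVec, ← Matrix.mulVec_transpose]
  simp only [dotProduct, Matrix.mulVec_diagonal, Pi.mul_apply]
  exact Finset.sum_congr rfl fun k _ => by ring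

lemma linkCost_dotProduct_sub_nonneg (hd : 0 ≤ d) {p p' : K → ℝ} (hp : p ∈ UEset Λ od d u)
    (hp' : p' ∈ Pset od) :
    0 ≤ u (bLam Λ od d *ᵥ p) ⬝ᵥ (bLam Λ od d *ᵥ p' - bLam Λ od d *ᵥ p) := by
  rw [← Matrix.mulVec_sub, dotProduct_bLam_mulVec]
  exact dotProduct_sub_nonneg_of_isCheapest hp.1
    (fun k hk => ((mem_UEset_iff_isCheapest.1 hp).2 k hk).qvec_mul hd) hp'

theorem bLam_mulVec_eq_of_mem_UEset (hd : 0 ≤ d)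
    (hmono : ∀ x ∈ Xset Λ od d, ∀ x' ∈ Xset Λ od d, x ≠ x' → 0 < (u x - u x') ⬝ᵥ (x - x'))
    {p p' : K → ℝ} (hp : p ∈ UEset Λ od d u) (hp' : p' ∈ UEset Λ od d u) :
    bLam Λ od d *ᵥ p = bLam Λ od d *ᵥ p' := by
  by_contra hne
  have hpos := hmono _ ⟨p, hp.1, rfl⟩ _ ⟨p', hp'.1, rfl⟩ hne
  have hvi := linkCost_dotProduct_sub_nonneg hd hp hp'.1
  have hvi' := linkCost_dotProduct_sub_nonneg hd hp' hp.1
  simp only [sub_dotProduct, dotProduct_sub] at hpos hvi hvi'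
  linarith

lemma continuousOn_routeCost (hu : ContinuousOn u (Xset Λ od d)) :
    ContinuousOn (routeCost Λ od d u) (Pset od) := by
  have hflow : Continuous fun p : K → ℝ => bLam Λ od d *ᵥ p := by fun_prop
  have hroute : Continuous fun y : A → ℝ => Λᵀ *ᵥ y := by fun_prop
  exact hroute.comp_continuousOn (hu.comp hflow.continuousOn (Set.mapsTo_image _ _))

end Equilibrium

/-! ### Logit choice over an active route set -/

section Logit

variable [DecidableEq W] {od : K → W} {r : ℝ} {S : Finset K} {s : K → ℝ}

/-- The normalizing constant of the logit choice at OD pair `w` when the routes in `S` are active;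
it is `0` if `S` contains no route of `w`. -/
def logitSum (od : K → W) (r : ℝ) (S : Finset K) (s : K → ℝ) (w : W) : ℝ :=
  ∑ k ∈ S with od k = w, Real.exp (-r * s k)

/-- The logit choice over the active route set `S` under the valuation `s`, extended by `0` to
inactive routes. -/
def activeLogit [DecidableEq K] (od : K → W) (r : ℝ) (S : Finset K) (s : K → ℝ) (k : K) : ℝ :=
  if k ∈ S then Real.exp (-r * s k) / logitSum od r S s (od k) else 0

lemma exp_le_logitSum {k : K} (hk : k ∈ S) :
    Real.exp (-r * s k) ≤ logitSum od r S s (od k) :=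
  Finset.single_le_sum (f := fun k => Real.exp (-r * s k)) (fun _ _ => (Real.exp_pos _).le)
    (Finset.mem_filter.2 ⟨hk, rfl⟩)

lemma logitSum_pos {k : K} (hk : k ∈ S) : 0 < logitSum od r S s (od k) :=
  (Real.exp_pos _).trans_le (exp_le_logitSum hk)

variable [DecidableEq K]

lemma activeLogit_of_mem {k : K} (hk : k ∈ S) :
    activeLogit od r S s k = Real.exp (-r * s k) / logitSum od r S s (od k) :=
  if_pos hk

lemma activeLogit_of_notMem {k : K} (hk : k ∉ S) : activeLogit od r S s k = 0 :=
  if_neg hk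

lemma activeLogit_pos {k : K} (hk : k ∈ S) : 0 < activeLogit od r S s k := by
  rw [activeLogit_of_mem hk]
  exact div_pos (Real.exp_pos _) (logitSum_pos hk)

lemma activeLogit_nonneg (k : K) : 0 ≤ activeLogit od r S s k := by
  by_cases hk : k ∈ S
  · exact (activeLogit_pos hk).le
  · exact (activeLogit_of_notMem hk).ge

lemma log_activeLogit {k : K} (hk : k ∈ S) :
    Real.log (activeLogit od r S s k) = -r * s k - Real.log (logitSum od r S s (od k)) := by
  rw [activeLogit_of_mem hk, Real.log_div (Real.exp_pos _).ne' (logitSum_pos hk).ne',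
    Real.log_exp]

lemma activeLogit_le_exp {k k' : K} (hk' : k' ∈ S) (hod : od k' = od k) :
    activeLogit od r S s k ≤ Real.exp (-(r * (s k - s k'))) := by
  by_cases hk : k ∈ S
  · rw [activeLogit_of_mem hk, ← hod]
    calc Real.exp (-r * s k) / logitSum od r S s (od k')
        ≤ Real.exp (-r * s k) / Real.exp (-r * s k') := by
          gcongr
          exact exp_le_logitSum hk'
      _ = Real.exp (-(r * (s k - s k'))) := by
          rw [← Real.exp_sub]
          ring_nf
  · rw [activeLogit_of_notMem hk]
    positivity

lemma activeLogit_mem_Pset [Fintype K] (hS : ∀ w, ∃ k ∈ S, od k = w) :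
    activeLogit od r S s ∈ Pset od := by
  refine ⟨activeLogit_nonneg, fun w => ?_⟩
  obtain ⟨k₀, hk₀, rfl⟩ := hS w
  have hactive : ∀ k ∈ S.filter (od · = od k₀),
      activeLogit od r S s k = Real.exp (-r * s k) / logitSum od r S s (od k₀) := by
    intro k hk
    obtain ⟨hkS, hod⟩ := Finset.mem_filter.1 hk
    rw [activeLogit_of_mem hkS, hod]
  calc (Sig od *ᵥ activeLogit od r S s) (od k₀)
      = ∑ k with od k = od k₀, activeLogit od r S s k := Sig_mulVec_apply _ _ _
    _ = ∑ k ∈ S with od k = od k₀, activeLogit od r S s k := by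
        refine (Finset.sum_subset (Finset.filter_subset_filter _ S.subset_univ) ?_).symm
        intro k hk hkS
        exact activeLogit_of_notMem fun h =>
          hkS (Finset.mem_filter.2 ⟨h, (Finset.mem_filter.1 hk).2⟩)
    _ = 1 := by
        rw [Finset.sum_congr rfl hactive, ← Finset.sum_div]
        exact div_self (logitSum_pos hk₀).ne'

end Logit

/-! ### Logit choice under cumulative valuations -/

lemma tendsto_atTop_of_tendsto_increment_pos {b : ℕ → ℝ} {δ : ℝ} (hδ : 0 < δ)
    (hb : Tendsto (fun t => b (t + 1) - b t) atTop (𝓝 δ)) : Tendsto b atTop atTop := by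
  have hmean : Tendsto (fun t : ℕ => (t : ℝ)⁻¹ * (b t - b 0)) atTop (𝓝 δ) := by
    simpa only [Finset.sum_range_sub] using hb.cesaro
  have hgap : Tendsto (fun t => b t - b 0) atTop atTop := by
    refine (tendsto_natCast_atTop_atTop.atTop_mul_pos hδ hmean).congr' ?_
    filter_upwards [eventually_ne_atTop 0] with t ht
    exact mul_inv_cancel_left₀ (Nat.cast_ne_zero.2 ht) _
  simpa using tendsto_atTop_add_const_right _ (b 0) hgap

section CumulativeLogit

variable [DecidableEq W] [DecidableEq K] {od : K → W} {r : ℝ} {S : Finset K}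
  {s : ℕ → K → ℝ} {c : K → ℝ}

lemma tendsto_activeLogit_zero_of_lt (hr : 0 < r)
    (hs : Tendsto (fun t => s (t + 1) - s t) atTop (𝓝 c)) {k k' : K} (hk' : k' ∈ S)
    (hod : od k' = od k) (hlt : c k' < c k) :
    Tendsto (fun t => activeLogit od r S (s t) k) atTop (𝓝 0) := by
  have hincr : ∀ j, Tendsto (fun t => s (t + 1) j - s t j) atTop (𝓝 (c j)) :=
    tendsto_pi_nhds.1 hs
  have hgap : Tendsto (fun t => s t k - s t k') atTop atTop := by
    refine tendsto_atTop_of_tendsto_increment_pos (sub_pos.2 hlt) ?_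
    refine ((hincr k).sub (hincr k')).congr fun t => ?_
    ring
  exact squeeze_zero (fun _ => activeLogit_nonneg k) (fun _ => activeLogit_le_exp hk' hod)
    (Real.tendsto_exp_neg_atTop_nhds_zero.comp (hgap.const_mul_atTop hr))

theorem isCheapest_of_tendsto_activeLogit (hr : 0 < r)
    (hs : Tendsto (fun t => s (t + 1) - s t) atTop (𝓝 c)) {p : K → ℝ}
    (hp : Tendsto (fun t => activeLogit od r S (s t)) atTop (𝓝 p))
    (hmin : ∀ w, ∃ k ∈ S, od k = w ∧ IsCheapest od c k) {k : K} (hk : p k ≠ 0) :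
    IsCheapest od c k := by
  obtain ⟨k₀, hk₀S, hod, hk₀⟩ := hmin (od k)
  have hle : c k ≤ c k₀ := not_lt.1 fun hlt =>
    hk (tendsto_nhds_unique (tendsto_pi_nhds.1 hp k)
      (tendsto_activeLogit_zero_of_lt hr hs hk₀S hod hlt))
  exact fun k' hk' => hle.trans (hk₀ k' (hk'.trans hod.symm))

theorem mem_UEset_of_tendsto_activeLogit [Fintype A] [Fintype W] [Fintype K]
    {Λ : Matrix A K ℝ} {d : W → ℝ} {u : (A → ℝ) → (A → ℝ)} {v : ℕ → A → ℝ}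
    {p : ℕ → K → ℝ} {pbar : K → ℝ} (hr : 0 < r)
    (hu : ContinuousOn u (Xset Λ od d))
    (hv : ∀ t, v (t + 1) = v t + u (bLam Λ od d *ᵥ p t))
    (hlogit : ∀ᶠ t in atTop, p t = activeLogit od r S (Λᵀ *ᵥ v t))
    (hmin : ∀ᶠ t in atTop, ∀ w, ∃ k ∈ S, od k = w ∧ IsCheapest od (routeCost Λ od d u (p t)) k)
    (hconv : Tendsto p atTop (𝓝 pbar)) : pbar ∈ UEset Λ od d u := by
  have hS : ∀ w, ∃ k ∈ S, od k = w := fun w => by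
    obtain ⟨t, ht⟩ := hmin.exists
    obtain ⟨k, hk, hod, -⟩ := ht w
    exact ⟨k, hk, hod⟩
  have hfeas : ∀ᶠ t in atTop, p t ∈ Pset od :=
    hlogit.mono fun _ ht => ht ▸ activeLogit_mem_Pset hS
  have hpbar : pbar ∈ Pset od := (isClosed_Pset od).mem_of_tendsto hconv hfeas
  have hcost : Tendsto (fun t => routeCost Λ od d u (p t)) atTop (𝓝 (routeCost Λ od d u pbar)) :=
    (continuousOn_routeCost hu pbar hpbar).tendsto.comp (tendsto_nhdsWithin_iff.2 ⟨hconv, hfeas⟩)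
  have hincr : Tendsto (fun t => Λᵀ *ᵥ v (t + 1) - Λᵀ *ᵥ v t) atTop
      (𝓝 (routeCost Λ od d u pbar)) :=
    hcost.congr fun t => by rw [hv, Matrix.mulVec_add, add_sub_cancel_left, routeCost]
  have hminbar : ∀ w, ∃ k ∈ S, od k = w ∧ IsCheapest od (routeCost Λ od d u pbar) k := fun w =>
    (isClosed_setOf_exists_isCheapest od S w).mem_of_tendsto hcost (hmin.mono fun _ ht => ht w)
  exact mem_UEset_iff_isCheapest.2 ⟨hpbar, fun _ hk =>
    isCheapest_of_tendsto_activeLogit (s := fun t => Λᵀ *ᵥ v t) hr hincr (hconv.congr' hlogit)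
      hminbar hk⟩

end CumulativeLogit

/-! ### Divergences between strategies -/

lemma sq_sqrt_sub_sqrt_le {a b : ℝ} (ha : 0 ≤ a) (hb : 0 ≤ b) (hab : b = 0 → a = 0) :
    (√a - √b) ^ 2 ≤ a * (Real.log a - Real.log b) - (a - b) := by
  rcases ha.eq_or_lt with rfl | ha
  · simp [Real.sq_sqrt hb]
  have hb : 0 < b := hb.lt_of_ne' fun h => ha.ne' (hab h)
  have hlog : Real.log b - Real.log a ≤ 2 * (√b / √a - 1) := by
    have h := Real.log_le_sub_one_of_pos (div_pos (Real.sqrt_pos.2 hb) (Real.sqrt_pos.2 ha))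
    rw [Real.log_div (Real.sqrt_pos.2 hb).ne' (Real.sqrt_pos.2 ha).ne', Real.log_sqrt hb.le,
      Real.log_sqrt ha.le] at h
    linarith
  have hmul : a * (√b / √a) = √a * √b := by
    rw [mul_div_left_comm, Real.div_sqrt, mul_comm]
  have hsq : (√a - √b) ^ 2 = a + b - 2 * (√a * √b) := by
    rw [sub_sq, Real.sq_sqrt ha.le, Real.sq_sqrt hb.le]
    ring
  linarith [mul_le_mul_of_nonneg_left hlog ha.le]

section Divergence

variable [Fintype W] [Fintype K] [DecidableEq W] {od : K → W} {d : W → ℝ}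

/-- The demand-weighted squared Hellinger distance of two strategies (not halved). Unlike `KLdiv` it
is continuous up to the boundary of the strategy set. -/
def sqHellinger (od : K → W) (d : W → ℝ) (p p' : K → ℝ) : ℝ :=
  ∑ k, qvec od d k * (√(p k) - √(p' k)) ^ 2

lemma continuous_sqHellinger_right (od : K → W) (d : W → ℝ) (p : K → ℝ) :
    Continuous (sqHellinger od d p) := by
  unfold sqHellinger
  fun_prop

lemma sqHellinger_pos (hd : ∀ w, 0 < d w) {p p' : K → ℝ} (hp : 0 ≤ p) (hp' : 0 ≤ p')
    (hne : p ≠ p') : 0 < sqHellinger od d p p' := by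
  obtain ⟨k, hk⟩ := Function.ne_iff.1 hne
  have hq : ∀ j, 0 < qvec od d j := fun j => by simpa only [qvec_apply] using hd (od j)
  have hsqrt : √(p k) - √(p' k) ≠ 0 :=
    sub_ne_zero.2 fun h => hk ((Real.sqrt_inj (hp k) (hp' k)).1 h)
  exact Finset.sum_pos' (fun j _ => mul_nonneg (hq j).le (sq_nonneg _))
    ⟨k, Finset.mem_univ k, mul_pos (hq k) (sq_pos_of_ne_zero hsqrt)⟩

lemma sqHellinger_le_KLdiv (hd : 0 ≤ d) {p p' : K → ℝ} (hp : p ∈ Pset od) (hp' : p' ∈ Pset od)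
    (hsupp : ∀ k, p' k = 0 → p k = 0) : sqHellinger od d p p' ≤ KLdiv od d p p' := by
  have hmass : qvec od d ⬝ᵥ (p - p') = 0 := by
    rw [dotProduct_sub, qvec_dotProduct_of_mem_Pset hp, qvec_dotProduct_of_mem_Pset hp', sub_self]
  calc sqHellinger od d p p'
      ≤ ∑ k, qvec od d k * (p k * (Real.log (p k) - Real.log (p' k)) - (p k - p' k)) := by
        refine Finset.sum_le_sum fun k _ => mul_le_mul_of_nonneg_left ?_ ?_
        · exact sq_sqrt_sub_sqrt_le (hp.1 k) (hp'.1 k) (hsupp k)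
        · rw [qvec_apply]
          exact hd _
    _ = KLdiv od d p p' - qvec od d ⬝ᵥ (p - p') := by
        simp only [mul_sub _ _ (_ - _), Finset.sum_sub_distrib]
        rfl
    _ = KLdiv od d p p' := by rw [hmass, sub_zero]

lemma tendsto_KLdiv_zero (od : K → W) (d : W → ℝ) {ι : Type*} {l : Filter ι} {p : ι → K → ℝ}
    {pbar : K → ℝ} (hp : Tendsto p l (𝓝 pbar)) :
    Tendsto (fun t => KLdiv od d pbar (p t)) l (𝓝 0) := by
  have hself : KLdiv od d pbar pbar = 0 := by simp [KLdiv]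
  rw [← hself]
  refine tendsto_finsetSum _ fun k _ => Tendsto.const_mul _ ?_
  by_cases hk : pbar k = 0
  · simp only [hk, zero_mul]
    exact tendsto_const_nhds
  · exact (((tendsto_pi_nhds.1 hp k).log hk).const_sub _).const_mul _

end Divergence

/-! ### Entropy of limits of logit strategies -/

section Entropy

variable [Fintype A] [Fintype W] [Fintype K] [DecidableEq W] [DecidableEq K]
  {Λ : Matrix A K ℝ} {od : K → W} {d : W → ℝ} {r : ℝ} {S : Finset K}

lemma KLdiv_activeLogit {p : K → ℝ} (hp : p ∈ Pset od) (hsupp : ∀ k, k ∉ S → p k = 0)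
    (v : A → ℝ) :
    KLdiv od d p (activeLogit od r S (Λᵀ *ᵥ v)) =
      negEnt od d p + r * (v ⬝ᵥ bLam Λ od d *ᵥ p)
        + ∑ w, d w * Real.log (logitSum od r S (Λᵀ *ᵥ v) w) := by
  rw [← qvec_dotProduct_of_mem_Pset hp, dotProduct_bLam_mulVec, KLdiv, negEnt, dotProduct,
    dotProduct, Finset.mul_sum, ← Finset.sum_add_distrib, ← Finset.sum_add_distrib]
  refine Finset.sum_congr rfl fun k _ => ?_
  by_cases hk : k ∈ S
  · rw [log_activeLogit hk, Pi.mul_apply, qvec_apply, qvec_apply]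
    ring
  · rw [hsupp k hk]
    ring

lemma KLdiv_activeLogit_sub_KLdiv_activeLogit {p p' : K → ℝ} (hp : p ∈ Pset od)
    (hsupp : ∀ k, k ∉ S → p k = 0) (hp' : p' ∈ Pset od) (hsupp' : ∀ k, k ∉ S → p' k = 0)
    (hflow : bLam Λ od d *ᵥ p = bLam Λ od d *ᵥ p') (v : A → ℝ) :
    KLdiv od d p' (activeLogit od r S (Λᵀ *ᵥ v)) - KLdiv od d p (activeLogit od r S (Λᵀ *ᵥ v)) =
      negEnt od d p' - negEnt od d p := by
  rw [KLdiv_activeLogit hp hsupp, KLdiv_activeLogit hp' hsupp', hflow]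
  ring

theorem sqHellinger_le_negEnt_sub_of_tendsto_activeLogit {ι : Type*} {l : Filter ι} [l.NeBot]
    {v : ι → A → ℝ} {p p' : K → ℝ} (hd : 0 ≤ d)
    (hlim : Tendsto (fun t => activeLogit od r S (Λᵀ *ᵥ v t)) l (𝓝 p)) (hp' : p' ∈ Pset od)
    (hsupp' : ∀ k, k ∉ S → p' k = 0) (hflow : bLam Λ od d *ᵥ p = bLam Λ od d *ᵥ p') :
    sqHellinger od d p' p ≤ negEnt od d p' - negEnt od d p := by
  have hS : ∀ w, ∃ k ∈ S, od k = w := fun w => by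
    obtain ⟨k, hod, hpos⟩ := exists_pos_of_mem_Pset hp' w
    exact ⟨k, by_contra fun hk => hpos.ne' (hsupp' k hk), hod⟩
  have hfeas : ∀ t, activeLogit od r S (Λᵀ *ᵥ v t) ∈ Pset od := fun _ => activeLogit_mem_Pset hS
  have hp : p ∈ Pset od := (isClosed_Pset od).mem_of_tendsto hlim (.of_forall hfeas)
  have hsupp : ∀ k, k ∉ S → p k = 0 := fun k hk =>
    tendsto_nhds_unique (tendsto_pi_nhds.1 hlim k)
      (tendsto_const_nhds.congr fun _ => (activeLogit_of_notMem hk).symm)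
  have hupper : Tendsto (fun t => KLdiv od d p' (activeLogit od r S (Λᵀ *ᵥ v t))) l
      (𝓝 (negEnt od d p' - negEnt od d p)) := by
    rw [← add_zero (negEnt od d p' - negEnt od d p)]
    refine ((tendsto_KLdiv_zero od d hlim).const_add _).congr fun t => ?_
    rw [← KLdiv_activeLogit_sub_KLdiv_activeLogit hp hsupp hp' hsupp' hflow (v t), sub_add_cancel]
  refine le_of_tendsto_of_tendsto' (((continuous_sqHellinger_right od d p').tendsto p).comp hlim)
    hupper fun t => sqHellinger_le_KLdiv hd hp' (hfeas t) fun k hk => ?_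
  exact hsupp' k fun hkS => (activeLogit_pos hkS).ne' hk

end Entropy

theorem statement14_general
    [Fintype A] [Fintype W] [Fintype K] [DecidableEq W] [DecidableEq K]
    (Λ : Matrix A K ℝ) (od : K → W) (d : W → ℝ) (hd : ∀ w, 0 < d w)
    (u : (A → ℝ) → (A → ℝ)) (hu : ContinuousOn u (Xset Λ od d))
    (hmono : ∀ x ∈ Xset Λ od d, ∀ x' ∈ Xset Λ od d, x ≠ x' →
      0 < (u x - u x') ⬝ᵥ (x - x'))
    (r : ℝ) (hr : 0 < r)
    (Kt : ℕ → Finset K) (v : ℕ → A → ℝ) (p : ℕ → K → ℝ)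
    (hvdyn : ∀ t, v (t + 1) = v t + u (bLam Λ od d *ᵥ p t))
    (hpdyn : ∀ t, p t = activeLogit od r (Kt t) (Λᵀ *ᵥ v t))
    (hKmin : ∀ t w, ∃ k ∈ Kt (t + 1), od k = w ∧ IsCheapest od (routeCost Λ od d u (p t)) k)
    (Kbar : Finset K) (hKbar : ∀ᶠ t in atTop, Kt t = Kbar)
    (pbar : K → ℝ) (hconv : Tendsto p atTop (𝓝 pbar))
    (hcover : ∀ pstar ∈ UEset Λ od d u, ∀ k, 0 < pstar k → k ∈ Kbar) :
    pbar ∈ UEset Λ od d u ∧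
      ∀ p' ∈ UEset Λ od d u, p' ≠ pbar → negEnt od d pbar < negEnt od d p' := by
  have hd₀ : 0 ≤ d := fun w => (hd w).le
  have hlogit : ∀ᶠ t in atTop, p t = activeLogit od r Kbar (Λᵀ *ᵥ v t) :=
    hKbar.mono fun t ht => ht ▸ hpdyn t
  have hmin : ∀ᶠ t in atTop, ∀ w, ∃ k ∈ Kbar, od k = w ∧
      IsCheapest od (routeCost Λ od d u (p t)) k :=
    ((tendsto_add_atTop_nat 1).eventually hKbar).mono fun t ht => ht ▸ hKmin t
  have hUE : pbar ∈ UEset Λ od d u :=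
    mem_UEset_of_tendsto_activeLogit hr hu hvdyn hlogit hmin hconv
  refine ⟨hUE, fun p' hp' hne => ?_⟩
  have hsupp : ∀ k, k ∉ Kbar → p' k = 0 := fun k hk =>
    (not_lt.1 fun hpos => hk (hcover p' hp' k hpos)).antisymm (hp'.1.1 k)
  have hflow := bLam_mulVec_eq_of_mem_UEset hd₀ hmono hUE hp'
  exact sub_pos.1 ((sqHellinger_pos hd hp'.1.1 hUE.1.1 hne).trans_le
    (sqHellinger_le_negEnt_sub_of_tendsto_activeLogit hd₀ (hconv.congr' hlogit) hp'.1 hsupp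
      hflow))

/-- Proposition 8: CULO with route exploration and cumulative link
valuations (Algorithm 2). Link valuations update by `vᵗ⁺¹ = vᵗ + u(xᵗ)` from `v⁰ = 0`;
active routes are valued by `s₊ᵗ = (Λ₊ᵗ)ᵀ vᵗ`; the strategy is the logit choice over
the active set; a minimum-cost route per OD pair is added each day if absent. If the
algorithm converges to a fixed active set `K̄₊` and strategy `p̄₊`, and
`K̄₊ ⊇ ⋃_{p* ∈ P*} supp p*`, then the extension `p̄ = [p̄₊; 0]` belongs to `P*` and is
the MEUE strategy (the unique minimizer of `φ` over `P*`). -/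
theorem statement14
    [Fintype A] [Fintype W] [Fintype K] [DecidableEq W] [DecidableEq K]
    (Λ : Matrix A K ℝ) (od : K → W) (d : W → ℝ)
    (hΛ : ∀ a k, Λ a k = 0 ∨ Λ a k = 1)
    (hd : ∀ w, 0 < d w)
    (u : (A → ℝ) → (A → ℝ))
    (hu : ContDiffOn ℝ 1 u (Xset Λ od d))
    (hnonneg : ∀ x ∈ Xset Λ od d, ∀ a, 0 ≤ u x a)
    (hmono : ∀ x ∈ Xset Λ od d, ∀ x' ∈ Xset Λ od d, x ≠ x' →
      0 < (u x - u x') ⬝ᵥ (x - x'))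
    (r : ℝ) (hr : 0 < r)
    (Kt : ℕ → Finset K) (v : ℕ → A → ℝ) (p : ℕ → K → ℝ)
    -- the initial active set contains at least one route per OD pair
    (hK0 : ∀ w, ∃ k ∈ Kt 0, od k = w)
    -- cumulative link valuations starting from zero
    (hv0 : v 0 = 0)
    (hvdyn : ∀ t, v (t + 1) = v t + u ((bLam Λ od d).mulVec (p t)))
    -- the strategy is the logit choice over the active set, with `s₊ᵗ = (Λ₊ᵗ)ᵀ vᵗ`
    (hpdyn : ∀ t k, p t k = if k ∈ Kt t then
        Real.exp (-r * Λᵀ.mulVec (v t) k) /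
          ∑ k' ∈ (Kt t).filter (fun k' => od k' = od k),
            Real.exp (-r * Λᵀ.mulVec (v t) k')
      else 0)
    -- active routes are never dropped, only minimum-cost routes are added,
    -- and after the update a minimum-cost route per OD pair is active
    (hKmono : ∀ t, Kt t ⊆ Kt (t + 1))
    (hKadd : ∀ t k, k ∈ Kt (t + 1) → k ∉ Kt t →
      ∀ k', od k' = od k →
        routeCost Λ od d u (p t) k ≤ routeCost Λ od d u (p t) k')
    (hKmin : ∀ t w, ∃ k ∈ Kt (t + 1), od k = w ∧
      ∀ k', od k' = od k →
        routeCost Λ od d u (p t) k ≤ routeCost Λ od d u (p t) k')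
    -- the algorithm converges to a fixed active route set and a fixed strategy
    (Kbar : Finset K) (hKbar : ∀ᶠ t in atTop, Kt t = Kbar)
    (pbar : K → ℝ) (hconv : Tendsto p atTop (nhds pbar))
    -- the limit active set covers all UE routes
    (hcover : ∀ pstar ∈ UEset Λ od d u, ∀ k, 0 < pstar k → k ∈ Kbar) :
    pbar ∈ UEset Λ od d u ∧
      ∀ p' ∈ UEset Λ od d u, p' ≠ pbar → negEnt od d pbar < negEnt od d p' :=
  statement14_general Λ od d hd u hu.continuousOn hmono r hr Kt v p hvdyn
    (fun t => funext (hpdyn t)) hKmin Kbar hKbar pbar hconv hcover
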